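/- Let n, p, q ≥ 1. Let g : ℝ × ℝᵖ → ℝ^q be continuously differentiable and write θ(t) = g(t, θ) for θ ∈ ℝᵖ. Let f : ℝⁿ × ℝ^q × ℝ → ℝⁿ be continuously differentiable. For each θ ∈ ℝᵖ let z(·; θ) : [0, T] → ℝⁿ solve z'(t) = f(z(t), g(t, θ), t) with fixed initial condition z(0; θ) = z₀, and assume the map θ ↦ z(t; θ) is continuously differentiable with derivative jointly continuous in (t, θ). For t ∈ [0, T] let Φ_{t,T} denote the map sending x ∈ ℝⁿ to the value at time T of the solution of y' = f(y, g(s, θ), s) with y(t) = x, and assume Φ_{t,T} is continuously differentiable with derivative jointly continuous in (t, x). Then the derivative of θ ↦ z(T; θ) at θ satisfies D_θ z(T; θ) = ∫₀ᵀ D_x Φ_{t,T}(z(t; θ)) ∘ (D_w f)(z(t; θ), g(t, θ), t) ∘ (D_θ g)(t, θ) dt. -/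

import Mathlib

open Set intervalIntegral

/-!
Write `z θ'` for the solution with parameter `θ'`. Since `Φ s` is constant along solutions with
parameter `θ`, the derivative of `s ↦ Φ s (z θ' s)` is `DΦ s (z θ' s)` applied to the difference of
the two vector fields, `f (z θ' s, g (s, θ'), s) - f (z θ' s, g (s, θ), s)`. Integrating over
`[0, T]` gives the Alekseev–Gröbner formula for `z θ' T - Φ 0 z₀`. Its integrand is the increment
from `θ` to `θ'` of a function of the parameter, at the moving point `z θ' s`; continuous dependence
of `z θ'` on `θ'` lets one replace `z θ' s` by `z θ s` to first order, uniformly in `s`. So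
`θ' ↦ z θ' T` is differentiable at `θ`, with the stated derivative.
-/

open Filter Topology Asymptotics MeasureTheory Uniformity
open scoped NNReal

section Uniformity

variable {X Y : Type*}

theorem tendsto_uniformity_prodMk [UniformSpace X] [UniformSpace Y] {ι : Type*} {l : Filter ι}
    {u v : ι → X} {u' v' : ι → Y} (h : Tendsto (fun i => (u i, v i)) l (𝓤 X))
    (h' : Tendsto (fun i => (u' i, v' i)) l (𝓤 Y)) :
    Tendsto (fun i => ((u i, u' i), (v i, v' i))) l (𝓤 (X × Y)) := by
  rw [uniformity_prod_eq_prod]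
  exact tendsto_map.comp (h.prodMk h')

theorem tendsto_uniformity_of_isCompact [UniformSpace X] [UniformSpace Y] {ι : Type*}
    {l : Filter ι} {K : Set X} (hK : IsCompact K) {φ : X → Y} (hφ : ∀ x ∈ K, ContinuousAt φ x)
    {u v : ι → X} (hu : ∀ᶠ i in l, u i ∈ K) (huv : Tendsto (fun i => (u i, v i)) l (𝓤 X)) :
    Tendsto (fun i => (φ (u i), φ (v i))) l (𝓤 Y) := by
  intro r hr
  rw [mem_map]
  filter_upwards [hu, huv.eventually (hK.uniformContinuousAt_of_continuousAt φ hφ hr)] with i hi h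
  exact h hi

theorem exists_eventually_dist_le_mul_of_isCompact [PseudoMetricSpace X] [PseudoMetricSpace Y]
    {w : X → Y} (hw : LocallyLipschitz w) {K : Set X} (hK : IsCompact K) :
    ∃ L : ℝ≥0, ∀ᶠ p in 𝓤 X, p.1 ∈ K → dist (w p.1) (w p.2) ≤ L * dist p.1 p.2 := by
  refine hK.induction_on
    (p := fun S => ∃ L : ℝ≥0, ∀ᶠ p in 𝓤 X, p.1 ∈ S → dist (w p.1) (w p.2) ≤ L * dist p.1 p.2)
    ⟨0, by simp⟩ (fun S S' hSS' ⟨L, hL⟩ => ⟨L, hL.mono fun p hp hpS => hp (hSS' hpS)⟩) ?_ ?_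
  · rintro S S' ⟨L, hL⟩ ⟨L', hL'⟩
    refine ⟨max L L', ?_⟩
    filter_upwards [hL, hL'] with p h h'
    rintro (hp | hp)
    · exact (h hp).trans (by gcongr; exact le_max_left _ _)
    · exact (h' hp).trans (by gcongr; exact le_max_right _ _)
  · intro x _
    obtain ⟨L, U, hU, hL⟩ := hw x
    obtain ⟨r, hr, hrU⟩ := Metric.mem_nhds_iff.1 hU
    refine ⟨_, mem_nhdsWithin_of_mem_nhds (Metric.ball_mem_nhds x (half_pos hr)), L, ?_⟩
    filter_upwards [Metric.dist_mem_uniformity (half_pos hr)] with p hp hpx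
    have hp₂ : dist p.2 x < r := calc
      dist p.2 x ≤ dist p.1 p.2 + dist p.1 x := dist_triangle_left _ _ _
      _ < r / 2 + r / 2 := add_lt_add hp hpx
      _ = r := add_halves r
    have hp₁ : dist p.1 x < r := hpx.trans (half_lt_self hr)
    exact hL.dist_le_mul _ (hrU hp₁) _ (hrU hp₂)

end Uniformity

section Calculus

variable {E F : Type*} [NormedAddCommGroup E] [NormedSpace ℝ E]
  [NormedAddCommGroup F] [NormedSpace ℝ F]

theorem isLittleO_sub_sub_clm_apply {ι : Type*} {l : Filter ι} {x₀ : E} {v w : ι → E}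
    (hv : Tendsto v l (𝓝 x₀)) (hw : Tendsto w l (𝓝 x₀)) {f : ι → E → F}
    {f' : ι → E → E →L[ℝ] F} {φ : ι → E →L[ℝ] F}
    (hf : ∀ᶠ p in l ×ˢ 𝓝 x₀, HasFDerivAt (f p.1) (f' p.1 p.2) p.2)
    (hf' : Tendsto (fun p : ι × E => (φ p.1, f' p.1 p.2)) (l ×ˢ 𝓝 x₀) (𝓤 (E →L[ℝ] F))) :
    (fun i => f i (v i) - f i (w i) - φ i (v i - w i)) =o[l] fun i => v i - w i := by
  refine .of_bound fun c hc => ?_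
  have hsegment := Eventually.segment_of_prod_nhds
    (r := fun i x => HasFDerivAt (f i) (f' i x) x ∧ dist (φ i) (f' i x) < c) hw hv
    (hf.and (hf' (Metric.dist_mem_uniformity hc)))
  filter_upwards [hsegment] with i hi
  refine (convex_segment (w i) (v i)).norm_image_sub_le_of_norm_hasFDerivWithin_le'
    (fun x hx => (hi x hx).1.hasFDerivWithinAt) (fun x hx => ?_)
    (left_mem_segment ..) (right_mem_segment ..)
  rw [← dist_eq_norm, dist_comm]
  exact (hi x hx).2.le

theorem hasDerivWithinAt_family_sub {Φ : ℝ → E → F} {DΦ : ℝ → E → E →L[ℝ] F} {S : Set ℝ}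
    {t : ℝ} {u y : ℝ → E} {u' y' : E} (huy : y t = u t)
    (hΦ : ∀ᶠ p in 𝓝[S] t ×ˢ 𝓝 (u t), HasFDerivAt (Φ p.1) (DΦ p.1 p.2) p.2)
    (hDΦ : Tendsto (fun p : ℝ × E => DΦ p.1 p.2) (𝓝[S] t ×ˢ 𝓝 (u t)) (𝓝 (DΦ t (u t))))
    (hu : HasDerivWithinAt u u' S t) (hy : HasDerivWithinAt y y' S t) :
    HasDerivWithinAt (fun s => Φ s (u s) - Φ s (y s)) (DΦ t (u t) (u' - y')) S t := by
  have hlin : HasDerivWithinAt (fun s => DΦ t (u t) (u s - y s)) (DΦ t (u t) (u' - y')) S t :=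
    (DΦ t (u t)).hasFDerivAt.comp_hasDerivWithinAt t (hu.sub hy)
  have hO : (fun s => u s - y s) =O[𝓝[S] t] fun s => s - t := by
    simpa [huy, Function.comp_def] using (hu.sub hy).isBigO_sub
  have ho : (fun s => Φ s (u s) - Φ s (y s) - DΦ t (u t) (u s - y s)) =o[𝓝[S] t]
      fun s => s - t :=
    (isLittleO_sub_sub_clm_apply hu.continuousWithinAt (huy ▸ hy.continuousWithinAt) hΦ
      (Uniform.tendsto_nhds_right.1 hDΦ)).trans_isBigO hO
  rw [hasDerivWithinAt_iff_isLittleO] at hlin ⊢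
  refine (ho.add hlin).congr_left fun s => ?_
  simp only [huy, sub_self, map_zero]
  abel

end Calculus

section IntegralCurve

variable {E P : Type*} [NormedAddCommGroup E] [NormedSpace ℝ E] {a b : ℝ}

theorem hasDerivWithinAt_Ici_of_isIntegralCurveOn {v : ℝ → E → E} {y : ℝ → E}
    (hy : IsIntegralCurveOn y v (Icc a b)) {t : ℝ} (ht : t ∈ Ico a b) :
    HasDerivWithinAt y (v t (y t)) (Ici t) t :=
  (hy t (Ico_subset_Icc_self ht)).mono_of_mem_nhdsWithin
    (mem_of_superset (Icc_mem_nhdsGE ht.2) (Icc_subset_Icc_left ht.1))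

theorem eqOn_Icc_of_isIntegralCurveOn {v : ℝ → E → E} (hv : LocallyLipschitz ↿v)
    {y₁ y₂ : ℝ → E} (h₁ : IsIntegralCurveOn y₁ v (Icc a b))
    (h₂ : IsIntegralCurveOn y₂ v (Icc a b)) (h : y₁ a = y₂ a) : EqOn y₁ y₂ (Icc a b) := by
  set S := y₁ '' Icc a b ∪ y₂ '' Icc a b
  have hS : IsCompact S := (isCompact_Icc.image_of_continuousOn h₁.continuousOn).union
    (isCompact_Icc.image_of_continuousOn h₂.continuousOn)
  obtain ⟨K, hK⟩ := hv.locallyLipschitzOn.exists_lipschitzOnWith_of_compact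
    ((isCompact_Icc (a := a) (b := b)).prod hS)
  have hvS : ∀ t ∈ Ico a b, LipschitzOnWith K (v t) S := fun t ht x hx x' hx' => by
    have ht := Ico_subset_Icc_self ht
    exact (hK (mk_mem_prod ht hx) (mk_mem_prod ht hx')).trans_eq (by simp [Prod.edist_eq])
  exact ODE_solution_unique_of_mem_Icc_right hvS
    h₁.continuousOn (fun t ht => hasDerivWithinAt_Ici_of_isIntegralCurveOn h₁ ht)
    (fun t ht => .inl (mem_image_of_mem _ (Ico_subset_Icc_self ht)))
    h₂.continuousOn (fun t ht => hasDerivWithinAt_Ici_of_isIntegralCurveOn h₂ ht)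
    (fun t ht => .inr (mem_image_of_mem _ (Ico_subset_Icc_self ht))) h

-- The barrier `η * exp ((L + 1) * (t - a))` keeps `u` inside the ball of radius `r`, so a growth
-- bound valid only in that ball suffices.
theorem norm_lt_of_norm_deriv_right_le {u u' : ℝ → E} {η r L : ℝ} (hη : 0 < η)
    (hL : 0 ≤ L) (hr : η * Real.exp ((L + 1) * (b - a)) < r) (hu : ContinuousOn u (Icc a b))
    (hu' : ∀ t ∈ Ico a b, HasDerivWithinAt u (u' t) (Ici t) t) (hua : ‖u a‖ ≤ η)
    (hbound : ∀ t ∈ Ico a b, ‖u t‖ < r → ‖u' t‖ ≤ L * max η ‖u t‖) :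
    ∀ t ∈ Icc a b, ‖u t‖ < r := by
  have hfence_lt : ∀ t ≤ b, η * Real.exp ((L + 1) * (t - a)) < r := fun t ht =>
    lt_of_le_of_lt (by gcongr) hr
  have hfence : ∀ t, HasDerivAt (fun t => η * Real.exp ((L + 1) * (t - a)))
      ((L + 1) * (η * Real.exp ((L + 1) * (t - a)))) t := fun t =>
    ((((hasDerivAt_id t).sub_const a).const_mul (L + 1)).exp.const_mul η).congr_deriv
      (by simp only [id_eq]; ring)
  suffices h : ∀ t ∈ Ico a b, ‖u t‖ = η * Real.exp ((L + 1) * (t - a)) →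
      ‖u' t‖ < (L + 1) * (η * Real.exp ((L + 1) * (t - a))) from fun t ht =>
    (image_norm_le_of_norm_deriv_right_lt_deriv_boundary hu hu' (by simpa using hua) hfence h
      ht).trans_lt (hfence_lt t ht.2)
  intro t ht hut
  have hηu : η ≤ ‖u t‖ := hut ▸ le_mul_of_one_le_right hη.le
    (Real.one_le_exp (mul_nonneg (by positivity) (sub_nonneg.2 ht.1)))
  have hur : ‖u t‖ < r := hut ▸ hfence_lt t ht.2.le
  calc ‖u' t‖ ≤ L * max η ‖u t‖ := hbound t ht hur
    _ < (L + 1) * ‖u t‖ := by rw [max_eq_right hηu]; linarith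
    _ = (L + 1) * (η * Real.exp ((L + 1) * (t - a))) := by rw [hut]

theorem tendstoUniformlyOn_of_isIntegralCurveOn [PseudoMetricSpace P] {w : P → ℝ → E → E}
    (hw : LocallyLipschitz ↿w) {z : P → ℝ → E}
    (hz : ∀ θ, IsIntegralCurveOn (z θ) (w θ) (Icc a b)) {θ : P}
    (hza : Tendsto (fun θ' => z θ' a) (𝓝 θ) (𝓝 (z θ a))) :
    TendstoUniformlyOn z (z θ) (𝓝 θ) (Icc a b) := by
  have hgraph : IsCompact ((fun t => (θ, t, z θ t)) '' Icc a b) :=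
    isCompact_Icc.image_of_continuousOn
      (continuousOn_const.prodMk (continuousOn_id.prodMk (hz θ).continuousOn))
  obtain ⟨L, hL⟩ := exists_eventually_dist_le_mul_of_isCompact hw hgraph
  obtain ⟨r, hr, hL⟩ := Metric.mem_uniformity_dist.1 hL
  refine Metric.tendstoUniformlyOn_iff.2 fun ε hε => ?_
  set M := Real.exp ((L + 1) * (b - a))
  obtain ⟨η, hη, hη_lt⟩ : ∃ η > 0, η < min (min r ε) (min r ε / M) := exists_between (by positivity)
  obtain ⟨hηr, hηM⟩ := lt_min_iff.1 hη_lt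
  filter_upwards [Metric.ball_mem_nhds θ hη, hza (Metric.ball_mem_nhds _ hη)]
    with θ' hθ' hθ'a t ht
  rw [Metric.mem_ball'] at hθ'
  rw [mem_preimage, Metric.mem_ball', dist_eq_norm] at hθ'a
  rw [dist_eq_norm]
  refine (norm_lt_of_norm_deriv_right_le hη L.2 ((lt_div_iff₀ (by positivity)).1 hηM)
    ((hz θ).continuousOn.sub (hz θ').continuousOn)
    (fun s hs => (hasDerivWithinAt_Ici_of_isIntegralCurveOn (hz θ) hs).sub
      (hasDerivWithinAt_Ici_of_isIntegralCurveOn (hz θ') hs))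
    hθ'a.le (fun s hs hsr => ?_) t ht).trans_le (min_le_right _ _)
  have hdist : dist (θ, s, z θ s) (θ', s, z θ' s) = max (dist θ θ') ‖z θ s - z θ' s‖ := by
    simp [Prod.dist_eq, dist_eq_norm]
  have hdist_lt : dist (θ, s, z θ s) (θ', s, z θ' s) < r :=
    hdist ▸ (max_lt (hθ'.trans hηr) hsr).trans_le (min_le_left _ _)
  have hlip : dist (w θ s (z θ s)) (w θ' s (z θ' s)) ≤ L * dist (θ, s, z θ s) (θ', s, z θ' s) :=
    hL hdist_lt (mem_image_of_mem _ (Ico_subset_Icc_self hs))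
  calc ‖w θ s (z θ s) - w θ' s (z θ' s)‖
      ≤ L * max (dist θ θ') ‖z θ s - z θ' s‖ := by rwa [hdist, dist_eq_norm] at hlip
    _ ≤ L * max η ‖z θ s - z θ' s‖ := by gcongr

end IntegralCurve

section TerminalMap

variable {E : Type*} [NormedAddCommGroup E] [NormedSpace ℝ E] {v : ℝ → E → E} {a b : ℝ}
  {Φ : ℝ → E → E} {DΦ : ℝ → E → E →L[ℝ] E}

/-- `IsTerminalMap v a b Φ` says that `Φ t` is the solution map of `y' = v t y` from time `t` to
the terminal time `b` (the paper's `Φ_{t,b}`), for `t ∈ [a, b]`. The witnessing solutions live on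
all of `[a, b]`, so solutions are assumed to extend backwards from time `t` as well. -/
def IsTerminalMap (v : ℝ → E → E) (a b : ℝ) (Φ : ℝ → E → E) : Prop :=
  ∀ t ∈ Icc a b, ∀ x, ∃ y, y t = x ∧ IsIntegralCurveOn y v (Icc a b) ∧ Φ t x = y b

namespace IsTerminalMap

theorem apply_right (hΦ : IsTerminalMap v a b Φ) (hab : a ≤ b) (x : E) : Φ b x = x := by
  obtain ⟨y, hyb, -, hΦy⟩ := hΦ b (right_mem_Icc.2 hab) x
  rw [hΦy, hyb]

theorem apply_integralCurve (hΦ : IsTerminalMap v a b Φ) (hv : LocallyLipschitz ↿v) {y : ℝ → E}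
    (hy : IsIntegralCurveOn y v (Icc a b)) {t : ℝ} (ht : t ∈ Icc a b) : Φ t (y t) = y b := by
  obtain ⟨x, hxt, hx, hΦx⟩ := hΦ t ht (y t)
  have hsub : Icc t b ⊆ Icc a b := Icc_subset_Icc_left ht.1
  rw [hΦx]
  exact eqOn_Icc_of_isIntegralCurveOn hv (hx.mono hsub) (hy.mono hsub) hxt (right_mem_Icc.2 ht.2)

-- `Φ s` is constant along the solution through `(t, u t)`, so subtracting that solution removes
-- any need to differentiate `Φ s` in `s`.
theorem hasDerivWithinAt (hΦ : IsTerminalMap v a b Φ) (hv : LocallyLipschitz ↿v)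
    (hDΦ : ∀ t ∈ Icc a b, ∀ x, HasFDerivAt (Φ t) (DΦ t x) x) (hDΦcont : Continuous ↿DΦ)
    {u : ℝ → E} {u' : E} {t : ℝ} (ht : t ∈ Icc a b)
    (hu : HasDerivWithinAt u u' (Icc a b) t) :
    HasDerivWithinAt (fun s => Φ s (u s)) (DΦ t (u t) (u' - v t (u t))) (Icc a b) t := by
  obtain ⟨y, hyt, hy, -⟩ := hΦ t ht (u t)
  have hfamily : ∀ᶠ p in 𝓝[Icc a b] t ×ˢ 𝓝 (u t), HasFDerivAt (Φ p.1) (DΦ p.1 p.2) p.2 :=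
    (eventually_mem_nhdsWithin.prod_inl _).mono fun p hp => hDΦ p.1 hp p.2
  have hcont : Tendsto ↿DΦ (𝓝[Icc a b] t ×ˢ 𝓝 (u t)) (𝓝 (DΦ t (u t))) :=
    (hDΦcont.tendsto (t, u t)).mono_left (by rw [nhds_prod_eq]; gcongr; exact nhdsWithin_le_nhds)
  have hdiff := hasDerivWithinAt_family_sub hyt hfamily hcont hu (hyt ▸ hy t ht)
  refine (hdiff.add_const (y b)).congr_of_mem (fun s hs => ?_) ht
  rw [hΦ.apply_integralCurve hv hy hs, sub_add_cancel]

theorem integral_eq_sub [CompleteSpace E] (hΦ : IsTerminalMap v a b Φ) (hab : a ≤ b)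
    (hv : LocallyLipschitz ↿v) (hDΦ : ∀ t ∈ Icc a b, ∀ x, HasFDerivAt (Φ t) (DΦ t x) x)
    (hDΦcont : Continuous ↿DΦ) {u u' : ℝ → E}
    (hu : ∀ t ∈ Icc a b, HasDerivWithinAt u (u' t) (Icc a b) t) (hu' : ContinuousOn u' (Icc a b)) :
    ∫ t in a..b, DΦ t (u t) (u' t - v t (u t)) = u b - Φ a (u a) := by
  have hderiv := fun t ht => hΦ.hasDerivWithinAt hv hDΦ hDΦcont ht (hu t ht)
  have hgraph : ContinuousOn (fun t => (t, u t)) (Icc a b) :=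
    continuousOn_id.prodMk fun t ht => (hu t ht).continuousWithinAt
  have hint : ContinuousOn (fun t => DΦ t (u t) (u' t - v t (u t))) (Icc a b) :=
    (hDΦcont.comp_continuousOn hgraph).clm_apply
      (hu'.sub (hv.continuous.comp_continuousOn hgraph))
  rw [integral_eq_sub_of_hasDerivAt_of_le hab (fun t ht => (hderiv t ht).continuousWithinAt)
    (fun t ht => (hderiv t (Ioo_subset_Icc_self ht)).hasDerivAt (Icc_mem_nhds ht.1 ht.2))
    (hint.intervalIntegrable_of_Icc hab), hΦ.apply_right hab]

end IsTerminalMap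

end TerminalMap

section ParametricIntegral

variable {E P : Type*} [NormedAddCommGroup E] [NormedSpace ℝ E]
  [NormedAddCommGroup P] [NormedSpace ℝ P]

theorem hasFDerivAt_intervalIntegral_of_isLittleO {F : P → ℝ → E} {F' : ℝ → P →L[ℝ] E}
    {x₀ : P} {a b : ℝ} (hF : ∀ᶠ x in 𝓝 x₀, IntervalIntegrable (F x) volume a b)
    (hF' : IntervalIntegrable F' volume a b)
    (h : (fun p : P × ℝ => F p.1 p.2 - F x₀ p.2 - F' p.2 (p.1 - x₀))
      =o[𝓝 x₀ ×ˢ 𝓟 (uIoc a b)] fun p => p.1 - x₀) :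
    HasFDerivAt (fun x => ∫ t in a..b, F x t) (∫ t in a..b, F' t) x₀ := by
  have hunif : ∀ c > 0, ∀ᶠ x in 𝓝 x₀, ∀ t ∈ uIoc a b,
      ‖F x t - F x₀ t - F' t (x - x₀)‖ ≤ c * ‖x - x₀‖ :=
    fun c hc => eventually_prod_principal_iff.1 (h.bound hc)
  refine hasFDerivAt_iff_isLittleO.2 (.of_bound fun c hc => ?_)
  filter_upwards [hF, hunif (c / (|b - a| + 1)) (by positivity)] with x hx hbound
  have hF'x : IntervalIntegrable (fun t => F' t (x - x₀)) volume a b :=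
    ⟨hF'.1.apply_continuousLinearMap _, hF'.2.apply_continuousLinearMap _⟩
  calc ‖(∫ t in a..b, F x t) - (∫ t in a..b, F x₀ t) - (∫ t in a..b, F' t) (x - x₀)‖
      = ‖∫ t in a..b, F x t - F x₀ t - F' t (x - x₀)‖ := by
        rw [integral_sub (hx.sub hF.self_of_nhds) hF'x, integral_sub hx hF.self_of_nhds,
          ContinuousLinearMap.intervalIntegral_apply hF']
    _ ≤ c / (|b - a| + 1) * ‖x - x₀‖ * |b - a| := norm_integral_le_of_norm_le_const hbound
    _ ≤ c * ‖x - x₀‖ := by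
        have : c / (|b - a| + 1) * |b - a| ≤ c := by
          rw [div_mul_eq_mul_div, div_le_iff₀ (by positivity)]
          nlinarith
        nlinarith [norm_nonneg (x - x₀)]

-- The increment of `ψ t (c θ' t)` is already of first order in `θ' - θ`, so replacing the curve
-- `c θ'` by `c θ` only has an effect of higher order.
theorem hasFDerivAt_integral_increment {X : Type*} [UniformSpace X] {a b : ℝ} {ψ : ℝ → X → P → E}
    {ψ' : ℝ → X → P → P →L[ℝ] E} (hψcont : Continuous ↿ψ)
    (hψ : ∀ t x θ, HasFDerivAt (ψ t x) (ψ' t x θ) θ) (hψ' : Continuous ↿ψ') {c : P → ℝ → X}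
    (hc : ∀ θ, ContinuousOn (c θ) (uIcc a b)) {θ : P}
    (hcθ : TendstoUniformlyOn c (c θ) (𝓝 θ) (uIcc a b)) :
    HasFDerivAt (fun θ' => ∫ t in a..b, (ψ t (c θ' t) θ' - ψ t (c θ' t) θ))
      (∫ t in a..b, ψ' t (c θ t) θ) θ := by
  have hgraph : ∀ θ₁ θ₂ : P, ContinuousOn (fun t => (t, c θ₁ t, θ₂)) (uIcc a b) := fun θ₁ _ =>
    continuousOn_id.prodMk ((hc θ₁).prodMk continuousOn_const)
  have hcunif : Tendsto (fun p : P × ℝ => (c θ p.2, c p.1 p.2)) (𝓝 θ ×ˢ 𝓟 (uIoc a b)) (𝓤 X) :=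
    tendstoUniformlyOn_iff_tendsto.1 (hcθ.mono uIoc_subset_uIcc)
  have hmem : ∀ᶠ p : (P × ℝ) × P in (𝓝 θ ×ˢ 𝓟 (uIoc a b)) ×ˢ 𝓝 θ,
      (p.1.2, c θ p.1.2, θ) ∈ (fun t => (t, c θ t, θ)) '' uIcc a b :=
    ((eventually_principal.2 fun t ht =>
      mem_image_of_mem _ (uIoc_subset_uIcc ht)).prod_inr _).prod_inl _
  have hclose : Tendsto
      (fun p : (P × ℝ) × P => ((p.1.2, c θ p.1.2, θ), (p.1.2, c p.1.1 p.1.2, p.2)))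
      ((𝓝 θ ×ˢ 𝓟 (uIoc a b)) ×ˢ 𝓝 θ) (𝓤 (ℝ × X × P)) :=
    tendsto_uniformity_prodMk (tendsto_diag_uniformity _ _)
      (tendsto_uniformity_prodMk (hcunif.comp tendsto_fst)
        (Uniform.tendsto_nhds_right.1 tendsto_snd))
  have hsmall : (fun p : P × ℝ => ψ p.2 (c p.1 p.2) p.1 - ψ p.2 (c p.1 p.2) θ
      - ψ' p.2 (c θ p.2) θ (p.1 - θ)) =o[𝓝 θ ×ˢ 𝓟 (uIoc a b)] fun p => p.1 - θ :=
    isLittleO_sub_sub_clm_apply (f := fun p => ψ p.2 (c p.1 p.2))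
      (f' := fun p => ψ' p.2 (c p.1 p.2)) tendsto_fst tendsto_const_nhds
      (.of_forall fun _ => hψ _ _ _)
      (tendsto_uniformity_of_isCompact (isCompact_uIcc.image_of_continuousOn (hgraph θ θ))
        (fun _ _ => hψ'.continuousAt) hmem hclose)
  refine hasFDerivAt_intervalIntegral_of_isLittleO (.of_forall fun θ' => ?_) ?_ ?_
  · exact ((hψcont.comp_continuousOn (hgraph θ' θ')).sub
      (hψcont.comp_continuousOn (hgraph θ' θ))).intervalIntegrable
  · exact (hψ'.comp_continuousOn (hgraph θ θ)).intervalIntegrable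
  · simpa only [sub_self, sub_zero] using hsmall

end ParametricIntegral

section ParametrizedField

variable {E W P : Type*} [NormedAddCommGroup E] [NormedSpace ℝ E] [NormedAddCommGroup W]
  [NormedSpace ℝ W] [NormedAddCommGroup P] [NormedSpace ℝ P] {f : E × W × ℝ → E} {g : ℝ × P → W}

theorem hasFDerivAt_field_comp_param (hf : Differentiable ℝ f) (hg : Differentiable ℝ g)
    (t : ℝ) (x : E) (θ : P) :
    HasFDerivAt (fun θ' => f (x, g (t, θ'), t))
      ((fderiv ℝ (fun w => f (x, w, t)) (g (t, θ))).comp (fderiv ℝ (fun θ' => g (t, θ')) θ)) θ := by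
  have hf' : Differentiable ℝ fun w => f (x, w, t) := by fun_prop
  have hg' : Differentiable ℝ fun θ' => g (t, θ') := by fun_prop
  exact (hf' _).hasFDerivAt.comp θ (hg' θ).hasFDerivAt

theorem continuous_fderiv_field_comp_param (hf : ContDiff ℝ 1 f) (hg : ContDiff ℝ 1 g) :
    Continuous fun p : ℝ × E × P =>
      (fderiv ℝ (fun w => f (p.2.1, w, p.1)) (g (p.1, p.2.2))).comp
        (fderiv ℝ (fun θ => g (p.1, θ)) p.2.2) := by
  have hgθ : Continuous fun p : ℝ × E × P => fderiv ℝ (fun θ => g (p.1, θ)) p.2.2 :=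
    Continuous.fderiv (n := 1) (f := fun (p : ℝ × E × P) θ => g (p.1, θ)) (by fun_prop)
      (by fun_prop) le_rfl
  have hfw : Continuous fun p : ℝ × E × P =>
      fderiv ℝ (fun w => f (p.2.1, w, p.1)) (g (p.1, p.2.2)) :=
    Continuous.fderiv (n := 1) (f := fun (p : ℝ × E × P) w => f (p.2.1, w, p.1)) (by fun_prop)
      (by fun_prop) le_rfl
  exact hfw.clm_comp hgθ

theorem continuous_total_derivative_decomposition_general [CompleteSpace E] {T : ℝ} (hT : 0 ≤ T)
    (hg : ContDiff ℝ 1 g) (hf : ContDiff ℝ 1 f) {z₀ : E} {z : P → ℝ → E}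
    (hz0 : ∀ θ', z θ' 0 = z₀)
    (hz : ∀ θ', IsIntegralCurveOn (z θ') (fun t x => f (x, g (t, θ'), t)) (Icc 0 T)) {θ : P}
    {Φ : ℝ → E → E} {DΦ : ℝ → E → E →L[ℝ] E}
    (hΦ : IsTerminalMap (fun t x => f (x, g (t, θ), t)) 0 T Φ)
    (hDΦ : ∀ t ∈ Icc 0 T, ∀ x, HasFDerivAt (Φ t) (DΦ t x) x) (hDΦcont : Continuous ↿DΦ) :
    HasFDerivAt (fun θ' => z θ' T)
      (∫ t in 0..T, (DΦ t (z θ t)).comp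
        ((fderiv ℝ (fun w => f (z θ t, w, t)) (g (t, θ))).comp
          (fderiv ℝ (fun θ' => g (t, θ')) θ))) θ := by
  have hzcont : ∀ θ', ContinuousOn (z θ') (uIcc 0 T) := fun θ' =>
    uIcc_of_le hT ▸ (hz θ').continuousOn
  have hfield : ContDiff ℝ 1 fun p : P × ℝ × E => f (p.2.2, g (p.2.1, p.1), p.2.1) := by fun_prop
  have hfieldθ : ContDiff ℝ 1 fun p : ℝ × E => f (p.2, g (p.1, θ), p.1) := by fun_prop
  have hzθ : TendstoUniformlyOn z (z θ) (𝓝 θ) (uIcc 0 T) := uIcc_of_le hT ▸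
    tendstoUniformlyOn_of_isIntegralCurveOn (w := fun θ' t x => f (x, g (t, θ'), t))
      hfield.locallyLipschitz hz (by simp only [hz0, tendsto_const_nhds])
  have hvariation : ∀ θ', z θ' T = Φ 0 z₀ +
      ∫ t in 0..T, (DΦ t (z θ' t) (f (z θ' t, g (t, θ'), t)) -
        DΦ t (z θ' t) (f (z θ' t, g (t, θ), t))) := fun θ' => by
    have hu' : ContinuousOn (fun t => f (z θ' t, g (t, θ'), t)) (Icc 0 T) :=
      hf.continuous.comp_continuousOn ((hz θ').continuousOn.prodMk
        ((hg.continuous.comp (by fun_prop)).continuousOn.prodMk continuousOn_id))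
    simp only [← map_sub]
    rw [hΦ.integral_eq_sub hT hfieldθ.locallyLipschitz hDΦ hDΦcont (hz θ') hu', hz0,
      add_sub_cancel]
  simp only [hvariation]
  have hDΦ' : Continuous fun p : ℝ × E × P => DΦ p.1 p.2.1 :=
    hDΦcont.comp (continuous_fst.prodMk continuous_snd.fst)
  refine (hasFDerivAt_integral_increment (ψ := fun t x θ' => DΦ t x (f (x, g (t, θ'), t))) ?_
    (fun t x θ' => (DΦ t x).hasFDerivAt.comp θ' (hasFDerivAt_field_comp_param
      (hf.differentiable one_ne_zero) (hg.differentiable one_ne_zero) t x θ')) ?_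
    hzcont hzθ).const_add _
  · exact hDΦ'.clm_apply (hf.continuous.comp (by fun_prop))
  · exact hDΦ'.clm_comp (continuous_fderiv_field_comp_param hf hg)

end ParametrizedField

/-- **Continuous total derivative decomposition** (Theorem 2 of the paper).  For the ODE
`z' (t) = f (z t, g (t, θ), t)` with fixed initial condition `z 0 = z₀`, the derivative
of the terminal state with respect to the parameters `θ` is
`D_θ z(T; θ) = ∫₀ᵀ D_x Φ_{t,T} (z t) ∘ (D_w f)(z t, g (t, θ), t) ∘ (D_θ g)(t, θ) dt`,
where `Φ_{t,T}` is the time-`t`-to-time-`T` solution map. -/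
theorem continuous_total_derivative_decomposition
    (n p q : ℕ) (hn : 1 ≤ n) (hp : 1 ≤ p) (hq : 1 ≤ q) (T : ℝ) (hT : 0 ≤ T)
    (g : ℝ × (Fin p → ℝ) → (Fin q → ℝ)) (hg : ContDiff ℝ 1 g)
    (f : (Fin n → ℝ) × (Fin q → ℝ) × ℝ → (Fin n → ℝ)) (hf : ContDiff ℝ 1 f)
    (z₀ : Fin n → ℝ) (z : (Fin p → ℝ) → ℝ → (Fin n → ℝ))
    (hz0 : ∀ θ', z θ' 0 = z₀)
    (hzode : ∀ θ', ∀ t ∈ Icc (0 : ℝ) T,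
      HasDerivAt (z θ') (f (z θ' t, g (t, θ'), t)) t)
    (Dz : ℝ → (Fin p → ℝ) → ((Fin p → ℝ) →L[ℝ] (Fin n → ℝ)))
    (hDz : ∀ t ∈ Icc (0 : ℝ) T, ∀ θ', HasFDerivAt (fun θ'' => z θ'' t) (Dz t θ') θ')
    (hDzcont : Continuous fun s : ℝ × (Fin p → ℝ) => Dz s.1 s.2)
    (θ : Fin p → ℝ)
    (Φ : ℝ → (Fin n → ℝ) → (Fin n → ℝ))
    (hΦ : ∀ t ∈ Icc (0 : ℝ) T, ∀ x, ∃ y : ℝ → (Fin n → ℝ),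
      y t = x ∧ (∀ s ∈ Icc (0 : ℝ) T, HasDerivAt y (f (y s, g (s, θ), s)) s) ∧
        Φ t x = y T)
    (DΦ : ℝ → (Fin n → ℝ) → ((Fin n → ℝ) →L[ℝ] (Fin n → ℝ)))
    (hDΦ : ∀ t ∈ Icc (0 : ℝ) T, ∀ x, HasFDerivAt (Φ t) (DΦ t x) x)
    (hDΦcont : Continuous fun s : ℝ × (Fin n → ℝ) => DΦ s.1 s.2) :
    Dz T θ = ∫ t in (0 : ℝ)..T,
      (DΦ t (z θ t)).comp
        ((fderiv ℝ (fun w => f (z θ t, w, t)) (g (t, θ))).comp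
          (fderiv ℝ (fun θ' => g (t, θ')) θ)) :=
  (hDz T (right_mem_Icc.2 hT) θ).unique <|
    continuous_total_derivative_decomposition_general hT hg hf hz0
      (fun θ' t ht => (hzode θ' t ht).hasDerivWithinAt)
      (fun t ht x =>
        let ⟨y, hyt, hy, hΦy⟩ := hΦ t ht x
        ⟨y, hyt, fun s hs => (hy s hs).hasDerivWithinAt, hΦy⟩)
      hDΦ hDΦcont
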